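/- arXiv:2404.04847 — 8 statements merged into one kernel-verified Lean document; each statement's English description precedes it below -/
import Mathlib

section
/- In any many-to-one assignment game (N,v_γ), the following coalitions are inessential: (1) any coalition containing at least two firms; (2) any coalition {i}∪T with a single firm i∈F and T⊆W with |T| > r_i; (3) any one-sided coalition (contained in F or contained in W) with at least two players. -/
open Finset
open scoped Classical

noncomputable section

variable {F W : Type*} [Fintype F] [Fintype W]

/-- `μ` is a matching between the firm coalition `S` and the worker coalition `T`:
each firm `i ∈ S` appears in at most `r i` pairs and each worker in `T` in at most one pair. -/
def IsMatching (r : F → ℕ) (S : Finset F) (T : Finset W) (μ : Finset (F × W)) : Prop :=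
  (∀ p ∈ μ, p.1 ∈ S ∧ p.2 ∈ T) ∧
  (∀ i : F, (μ.filter fun p => p.1 = i).card ≤ r i) ∧
  (∀ j : W, (μ.filter fun p => p.2 = j).card ≤ 1)

/-- total value of a matching -/
def matchValue (A : F → W → ℝ) (μ : Finset (F × W)) : ℝ := ∑ p ∈ μ, A p.1 p.2

lemma empty_isMatching (r : F → ℕ) (S : Finset F) (T : Finset W) :
    IsMatching r S T (∅ : Finset (F × W)) := by
  refine ⟨by simp, ?_, ?_⟩ <;> intro _ <;> simp

/-- worth of the coalition formed by firms `S` and workers `T`. -/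
def vGamma (A : F → W → ℝ) (r : F → ℕ) (S : Finset F) (T : Finset W) : ℝ :=
  ((S ×ˢ T).powerset.filter fun μ => IsMatching r S T μ).sup'
    ⟨∅, Finset.mem_filter.mpr ⟨Finset.mem_powerset.mpr (Finset.empty_subset _),
        empty_isMatching r S T⟩⟩ (matchValue A)

/-- firms belonging to a coalition of `F ⊕ W` -/
def firmPart (C : Finset (F ⊕ W)) : Finset F := univ.filter (fun i => Sum.inl i ∈ C)

/-- workers belonging to a coalition of `F ⊕ W` -/
def workerPart (C : Finset (F ⊕ W)) : Finset W := univ.filter (fun j => Sum.inr j ∈ C)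

/-- the coalitional function of the many-to-one assignment game -/
def gameValue (A : F → W → ℝ) (r : F → ℕ) (C : Finset (F ⊕ W)) : ℝ :=
  vGamma A r (firmPart C) (workerPart C)

/-- core membership -/
def inCore {N : Type*} [Fintype N] (v : Finset N → ℝ) (z : N → ℝ) : Prop :=
  (∑ k, z k) = v univ ∧ ∀ C : Finset N, v C ≤ ∑ k ∈ C, z k

/-- optimal matching of the grand coalition -/
def IsOptimalMatching (A : F → W → ℝ) (r : F → ℕ) (μ : Finset (F × W)) : Prop :=
  IsMatching r univ univ μ ∧
  ∀ μ' : Finset (F × W), IsMatching r univ univ μ' → matchValue A μ' ≤ matchValue A μ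

/-- workers assigned to firm `i` under the assignment function `m` -/
def assignedTo (m : W → F) (i : F) : Finset W := univ.filter fun j => m j = i

/-- the matching associated with an assignment function (every worker matched) -/
def matchingOfFn (m : W → F) : Finset (F × W) := univ.image fun j => (m j, j)

/-- `m : W → F` represents an optimal matching of a capacity-balanced market that assigns
exactly `r i` workers to each firm `i` and leaves no worker unmatched. -/
def IsBalancedOptimal (A : F → W → ℝ) (r : F → ℕ) (m : W → F) : Prop :=
  (∀ i : F, (assignedTo m i).card = r i) ∧
  IsOptimalMatching A r (matchingOfFn m)

/-- the projection of the core to the workers' payoffs -/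
def CW (A : F → W → ℝ) (m : W → F) : Set (W → ℝ) :=
  { y | (∀ j : W, 0 ≤ y j ∧ y j ≤ A (m j) j) ∧
        ∀ j k : W, m j ≠ m k → A (m j) k - A (m j) j ≤ y k - y j }

/-- excess of a coalition at a payoff vector -/
def excess {N : Type*} (v : Finset N → ℝ) (z : N → ℝ) (S : Finset N) : ℝ :=
  v S - ∑ k ∈ S, z k

/-- maximum surplus `s_ij(z)` of `i` against `j` at `z` -/
def maxSurplus {N : Type*} (v : Finset N → ℝ) (z : N → ℝ) (i j : N) : ℝ :=
  sSup { e | ∃ S : Finset N, i ∈ S ∧ j ∉ S ∧ e = excess v z S }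

def isImputation {N : Type*} [Fintype N] (v : Finset N → ℝ) (z : N → ℝ) : Prop :=
  (∑ k, z k) = v univ ∧ ∀ k : N, v {k} ≤ z k

def inKernel {N : Type*} [Fintype N] (v : Finset N → ℝ) (z : N → ℝ) : Prop :=
  isImputation v z ∧ ∀ i j : N, i ≠ j → maxSurplus v z i j = maxSurplus v z j i

/-- A coalition is inessential if it admits a nontrivial partition into two coalitions
whose values weakly majorize its own value. -/
def Inessential {N : Type*} (v : Finset N → ℝ) (R : Finset N) : Prop :=
  ∃ S T : Finset N, S.Nonempty ∧ T.Nonempty ∧ Disjoint S T ∧ S ∪ T = R ∧ v R ≤ v S + v T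

def Essential {N : Type*} (v : Finset N → ℝ) (R : Finset N) : Prop :=
  R.Nonempty ∧ ¬ Inessential v R

/-- arcs of the tight digraph on `W ∪ {0}` (node `0` is `none`) -/
def tightArc (A : F → W → ℝ) (m : W → F) (y : W → ℝ) : Option W → Option W → Prop
  | none, none => False
  | none, some k => y k = 0
  | some j, none => y j = A (m j) j
  | some j, some k => m j ≠ m k ∧ y k - y j = A (m j) k - A (m j) j

/-! Call a set of players closed under a matching if no matched pair has exactly one member in it.
Splitting an optimal matching of a coalition along a closed set `S` gives matchings of `S` and of
its complement, so a coalition is inessential as soon as each of its matchings admits a nonempty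
proper closed subset. With two firms, one firm and its workers form such a subset; with excess
workers, or with one side missing, an unmatched player does. -/

section Matching

variable {F W : Type*} {r : F → ℕ} {S S' : Finset F} {T T' : Finset W} {μ ν : Finset (F × W)}

lemma IsMatching.of_subset (h : IsMatching r S T μ) (hνμ : ν ⊆ μ)
    (hν : ∀ p ∈ ν, p.1 ∈ S' ∧ p.2 ∈ T') : IsMatching r S' T' ν :=
  ⟨hν, fun i => (card_le_card (filter_subset_filter _ hνμ)).trans (h.2.1 i),
    fun j => (card_le_card (filter_subset_filter _ hνμ)).trans (h.2.2 j)⟩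

lemma IsMatching.firm_unique (h : IsMatching r S T μ) {i k : F} {j : W}
    (hi : (i, j) ∈ μ) (hk : (k, j) ∈ μ) : i = k :=
  congrArg Prod.fst <| card_le_one.1 (h.2.2 j) (i, j) (mem_filter.2 ⟨hi, rfl⟩) (k, j)
    (mem_filter.2 ⟨hk, rfl⟩)

lemma IsMatching.card_le_sum_capacity (h : IsMatching r S T μ) : μ.card ≤ ∑ i ∈ S, r i :=
  calc μ.card = ∑ i ∈ S, (μ.filter fun p => p.1 = i).card :=
        card_eq_sum_card_fiberwise fun p hp => (h.1 p hp).1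
    _ ≤ ∑ i ∈ S, r i := sum_le_sum fun i _ => h.2.1 i

lemma IsMatching.exists_unmatched_worker (h : IsMatching r S T μ)
    (hcard : ∑ i ∈ S, r i < T.card) : ∃ j ∈ T, ∀ p ∈ μ, p.2 ≠ j := by
  have hmatched : (μ.image Prod.snd).card < T.card :=
    (card_image_le.trans h.card_le_sum_capacity).trans_lt hcard
  obtain ⟨j, hjT, hj⟩ := exists_mem_notMem_of_card_lt_card hmatched
  exact ⟨j, hjT, fun p hp hpj => hj (mem_image.2 ⟨p, hp, hpj⟩)⟩

/-- A set `S` of players is closed under the matching `μ` if every pair of `μ` lies either inside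
`S` or outside it. In particular, `{x}` is closed precisely when the player `x` is unmatched. -/
def IsClosedUnder (μ : Finset (F × W)) (S : Finset (F ⊕ W)) : Prop :=
  ∀ p ∈ μ, Sum.inl p.1 ∈ S ↔ Sum.inr p.2 ∈ S

/-- The coalition formed by the firm `i` and the workers that `μ` assigns to it. -/
def firmBlock (μ : Finset (F × W)) (i : F) : Finset (F ⊕ W) :=
  insert (Sum.inl i) ((μ.filter fun p => p.1 = i).image fun p => Sum.inr p.2)

lemma inl_mem_firmBlock {i k : F} : Sum.inl k ∈ firmBlock μ i ↔ k = i := by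
  simp [firmBlock]

lemma inr_mem_firmBlock {i : F} {j : W} : Sum.inr j ∈ firmBlock μ i ↔ (i, j) ∈ μ := by
  simp [firmBlock]

lemma IsMatching.isClosedUnder_firmBlock (h : IsMatching r S T μ) (i : F) :
    IsClosedUnder μ (firmBlock μ i) := by
  rintro ⟨k, j⟩ hkj
  rw [inl_mem_firmBlock, inr_mem_firmBlock]
  exact ⟨fun hki => hki ▸ hkj, h.firm_unique hkj⟩

lemma mem_firmPart [Fintype F] {C : Finset (F ⊕ W)} {i : F} :
    i ∈ firmPart C ↔ Sum.inl i ∈ C := by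
  simp [firmPart]

lemma mem_workerPart [Fintype W] {C : Finset (F ⊕ W)} {j : W} :
    j ∈ workerPart C ↔ Sum.inr j ∈ C := by
  simp [workerPart]

end Matching

lemma IsMatching.matchValue_le_vGamma (A : F → W → ℝ) {r : F → ℕ} {S : Finset F} {T : Finset W}
    {μ : Finset (F × W)} (h : IsMatching r S T μ) : matchValue A μ ≤ vGamma A r S T :=
  le_sup' (matchValue A) <| mem_filter.2
    ⟨mem_powerset.2 fun p hp => mem_product.2 (h.1 p hp), h⟩

lemma exists_isMatching_vGamma_eq (A : F → W → ℝ) (r : F → ℕ) (S : Finset F) (T : Finset W) :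
    ∃ μ, IsMatching r S T μ ∧ vGamma A r S T = matchValue A μ := by
  obtain ⟨μ, hμ, hval⟩ := exists_mem_eq_sup'
    (s := (S ×ˢ T).powerset.filter fun μ => IsMatching r S T μ)
    ⟨∅, mem_filter.2 ⟨empty_mem_powerset _, empty_isMatching r S T⟩⟩ (matchValue A)
  exact ⟨μ, (mem_filter.1 hμ).2, hval⟩

lemma Inessential.of_ssubset {N : Type*} [DecidableEq N] {v : Finset N → ℝ} {R S : Finset N}
    (hS : S.Nonempty) (hSR : S ⊂ R) (hv : v R ≤ v S + v (R \ S)) : Inessential v R :=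
  ⟨S, R \ S, hS, sdiff_nonempty.2 hSR.2, disjoint_sdiff,
    by convert union_sdiff_of_subset hSR.1, hv⟩

section Coalition

variable {A : F → W → ℝ} {r : F → ℕ} {C S : Finset (F ⊕ W)} {μ : Finset (F × W)}

lemma IsMatching.matchValue_le_gameValue_add (A : F → W → ℝ)
    (h : IsMatching r (firmPart C) (workerPart C) μ) (hS : IsClosedUnder μ S) :
    matchValue A μ ≤ gameValue A r S + gameValue A r (C \ S) := by
  have hinside : IsMatching r (firmPart S) (workerPart S)
      (μ.filter fun p => Sum.inl p.1 ∈ S) := by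
    refine h.of_subset (filter_subset _ _) fun p hp => ?_
    obtain ⟨hpμ, hpS⟩ := mem_filter.1 hp
    exact ⟨mem_firmPart.2 hpS, mem_workerPart.2 ((hS p hpμ).1 hpS)⟩
  have houtside : IsMatching r (firmPart (C \ S)) (workerPart (C \ S))
      (μ.filter fun p => Sum.inl p.1 ∉ S) := by
    refine h.of_subset (filter_subset _ _) fun p hp => ?_
    obtain ⟨hpμ, hpS⟩ := mem_filter.1 hp
    obtain ⟨hfirm, hworker⟩ := h.1 p hpμ
    exact ⟨mem_firmPart.2 (mem_sdiff.2 ⟨mem_firmPart.1 hfirm, hpS⟩),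
      mem_workerPart.2 (mem_sdiff.2 ⟨mem_workerPart.1 hworker, mt (hS p hpμ).2 hpS⟩)⟩
  calc matchValue A μ
      = matchValue A (μ.filter fun p => Sum.inl p.1 ∈ S) +
          matchValue A (μ.filter fun p => Sum.inl p.1 ∉ S) :=
        (sum_filter_add_sum_filter_not _ _ _).symm
    _ ≤ gameValue A r S + gameValue A r (C \ S) :=
        add_le_add (hinside.matchValue_le_vGamma A) (houtside.matchValue_le_vGamma A)

lemma inessential_of_forall_exists_isClosedUnder
    (h : ∀ μ, IsMatching r (firmPart C) (workerPart C) μ →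
      ∃ S : Finset (F ⊕ W), S.Nonempty ∧ S ⊂ C ∧ IsClosedUnder μ S) :
    Inessential (gameValue A r) C := by
  obtain ⟨μ, hμ, hval⟩ := exists_isMatching_vGamma_eq A r (firmPart C) (workerPart C)
  obtain ⟨S, hS, hSC, hclosed⟩ := h μ hμ
  exact .of_ssubset hS hSC (hval.trans_le (hμ.matchValue_le_gameValue_add A hclosed))

lemma inessential_of_forall_exists_isClosedUnder_singleton (hC : C.Nontrivial)
    (h : ∀ μ, IsMatching r (firmPart C) (workerPart C) μ → ∃ x ∈ C, IsClosedUnder μ {x}) :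
    Inessential (gameValue A r) C := by
  refine inessential_of_forall_exists_isClosedUnder fun μ hμ => ?_
  obtain ⟨x, hx, hclosed⟩ := h μ hμ
  have hssub : {x} ⊂ C :=
    ⟨singleton_subset_iff.2 hx, fun hsub => hC.not_subset_singleton hsub⟩
  exact ⟨{x}, singleton_nonempty x, hssub, hclosed⟩

lemma inessential_of_nontrivial_firmPart (hC : (firmPart C).Nontrivial) :
    Inessential (gameValue A r) C := by
  refine inessential_of_forall_exists_isClosedUnder fun μ hμ => ?_
  obtain ⟨i, hi, k, hk, hik⟩ := hC
  have hsub : firmBlock μ i ⊆ C := by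
    rintro (l | j) hmem
    · rw [inl_mem_firmBlock.1 hmem]
      exact mem_firmPart.1 hi
    · exact mem_workerPart.1 (hμ.1 _ (inr_mem_firmBlock.1 hmem)).2
  have hssub : firmBlock μ i ⊂ C :=
    (ssubset_iff_of_subset hsub).2
      ⟨Sum.inl k, mem_firmPart.1 hk, fun hmem => hik (inl_mem_firmBlock.1 hmem).symm⟩
  exact ⟨firmBlock μ i, ⟨Sum.inl i, inl_mem_firmBlock.2 rfl⟩, hssub,
    hμ.isClosedUnder_firmBlock i⟩

lemma inessential_of_sum_capacity_lt_card_workerPart (hC : C.Nontrivial)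
    (hcard : ∑ i ∈ firmPart C, r i < (workerPart C).card) : Inessential (gameValue A r) C := by
  refine inessential_of_forall_exists_isClosedUnder_singleton hC fun μ hμ => ?_
  obtain ⟨j, hj, hunmatched⟩ := hμ.exists_unmatched_worker hcard
  exact ⟨Sum.inr j, mem_workerPart.1 hj, fun p hp => by simp [hunmatched p hp]⟩

lemma inessential_insert_firm_image_workers {i : F} {T : Finset W} (hT : r i < T.card) :
    Inessential (gameValue A r) (insert (Sum.inl i) (T.image Sum.inr)) := by
  obtain ⟨j, hj⟩ : T.Nonempty := card_pos.1 (Nat.zero_lt_of_lt hT)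
  set C : Finset (F ⊕ W) := insert (Sum.inl i) (T.image Sum.inr) with hC
  have hfirm : firmPart C = {i} := by
    ext k
    simp [mem_firmPart, hC]
  have hworker : workerPart C = T := by
    ext k
    simp [mem_workerPart, hC]
  have hnontrivial : C.Nontrivial :=
    ⟨Sum.inl i, by simp [hC], Sum.inr j, by simp [hC, hj], Sum.inl_ne_inr⟩
  refine inessential_of_sum_capacity_lt_card_workerPart hnontrivial ?_
  rwa [hfirm, hworker, sum_singleton]

lemma inessential_of_oneSided (hC : C.Nontrivial) (h : firmPart C = ∅ ∨ workerPart C = ∅) :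
    Inessential (gameValue A r) C := by
  refine inessential_of_forall_exists_isClosedUnder_singleton hC fun μ hμ => ?_
  obtain ⟨x, hx⟩ := hC.nonempty
  refine ⟨x, hx, fun p hp => ?_⟩
  obtain ⟨hfirm, hworker⟩ := hμ.1 p hp
  rcases h with h | h
  · simp [h] at hfirm
  · simp [h] at hworker

end Coalition

theorem manyToOne_inessential_coalitions_general (A : F → W → ℝ) (r : F → ℕ) :
    (∀ C : Finset (F ⊕ W), 2 ≤ (firmPart C).card → Inessential (gameValue A r) C) ∧
    (∀ (i : F) (T : Finset W), r i < T.card →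
        Inessential (gameValue A r) (insert (Sum.inl i) (T.image Sum.inr))) ∧
    (∀ C : Finset (F ⊕ W), 2 ≤ C.card →
        (firmPart C = ∅ ∨ workerPart C = ∅) → Inessential (gameValue A r) C) :=
  ⟨fun _ hC => inessential_of_nontrivial_firmPart (one_lt_card_iff_nontrivial.1 hC),
    fun _ _ hT => inessential_insert_firm_image_workers hT,
    fun _ hC => inessential_of_oneSided (one_lt_card_iff_nontrivial.1 hC)⟩

/-- inessential coalitions in many-to-one assignment games. -/
theorem manyToOne_inessential_coalitions (A : F → W → ℝ) (r : F → ℕ)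
    (hA : ∀ i j, 0 ≤ A i j) :
    (∀ C : Finset (F ⊕ W), 2 ≤ (firmPart C).card → Inessential (gameValue A r) C) ∧
    (∀ (i : F) (T : Finset W), r i < T.card →
        Inessential (gameValue A r) (insert (Sum.inl i) (T.image Sum.inr))) ∧
    (∀ C : Finset (F ⊕ W), 2 ≤ C.card →
        (firmPart C = ∅ ∨ workerPart C = ∅) → Inessential (gameValue A r) C) :=
  manyToOne_inessential_coalitions_general A r

end
end

section
/- Let γ=(F,W,A,r) be a capacity-balanced many-to-one assignment market with optimal matching μ. Then (x,y)∈ℝ^F×ℝ^W belongs to the core C(v_γ) if and only if (μ,y) is a competitive equilibrium of the market and x_i = Σ_{j∈μ(i)}(a_{ij}−y_j) for all i∈F. In particular, the projection of the core to the workers' coordinates equals the set of competitive salary vectors. -/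
open Finset
open scoped Classical

noncomputable section

variable {F W : Type*} [Fintype F] [Fintype W]

/-- `(m, y)` is a competitive equilibrium of the capacity-balanced market: salaries are
nonnegative and each firm's assigned set of workers maximizes its net profit among all
sets of workers within its capacity (no worker is unmatched under `m`). -/
def IsCompEqBal (A : F → W → ℝ) (r : F → ℕ) (m : W → F) (y : W → ℝ) : Prop :=
  (∀ j : W, 0 ≤ y j) ∧
  ∀ (i : F) (S : Finset W), S.card ≤ r i →
    ∑ j ∈ S, (A i j - y j) ≤ ∑ j ∈ assignedTo m i, (A i j - y j)

/-!
Coalitional rationality already follows from its instances for single workers (salaries are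
nonnegative) and for one firm together with at most `r i` workers (the firm's payoff bounds its net
profit from every admissible set), because the value of a matching is the sum of the firms' net
profits and of the matched workers' salaries. Under these inequalities, efficiency with respect to
an optimal matching `μ` is complementary slackness: each firm earns exactly its net profit from
`μ(i)`, and each unmatched worker is paid zero.
-/

section Matchings

omit [Fintype F] [Fintype W]

/-- The set `μ(i)` of workers matched to firm `i` by `μ`. -/
def matchedWorkers (μ : Finset (F × W)) (i : F) : Finset W :=
  (μ.filter fun p => p.1 = i).image Prod.snd

variable {A : F → W → ℝ} {r : F → ℕ} {S : Finset F} {T : Finset W} {μ : Finset (F × W)}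
  {x : F → ℝ} {y : W → ℝ}

lemma isMatching_singleton_product {i : F} (hT : T.card ≤ r i) :
    IsMatching r {i} T ({i} ×ˢ T) := by
  refine ⟨fun p hp => mem_product.mp hp, fun k => ?_, fun j => ?_⟩
  · by_cases hk : i = k
    · subst hk
      exact (card_filter_le _ _).trans (by simpa using hT)
    · rw [filter_false_of_mem (by simp [hk]), card_empty]
      exact Nat.zero_le _
  · simp only [card_le_one, mem_filter, mem_product, mem_singleton]
    rintro p ⟨⟨hp, -⟩, hpj⟩ q ⟨⟨hq, -⟩, hqj⟩
    exact Prod.ext (hp.trans hq.symm) (hpj.trans hqj.symm)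

lemma matchValue_singleton_product (i : F) : matchValue A ({i} ×ˢ T) = ∑ j ∈ T, A i j := by
  simp only [matchValue, sum_product, sum_singleton]

namespace IsMatching

lemma injOn_snd (hμ : IsMatching r S T μ) : Set.InjOn Prod.snd (μ : Set (F × W)) :=
  fun _ hp q hq hpq =>
    card_le_one.mp (hμ.2.2 q.2) _ (mem_filter.mpr ⟨hp, hpq⟩) _ (mem_filter.mpr ⟨hq, rfl⟩)

lemma image_snd_subset (hμ : IsMatching r S T μ) : μ.image Prod.snd ⊆ T :=
  image_subset_iff.mpr fun p hp => (hμ.1 p hp).2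

lemma card_matchedWorkers_le (hμ : IsMatching r S T μ) (i : F) :
    (matchedWorkers μ i).card ≤ r i :=
  card_image_le.trans (hμ.2.1 i)

lemma sum_sum_matchedWorkers {M : Type*} [AddCommMonoid M] (hμ : IsMatching r S T μ)
    (f : F → W → M) :
    ∑ i ∈ S, ∑ j ∈ matchedWorkers μ i, f i j = ∑ p ∈ μ, f p.1 p.2 := by
  rw [← sum_fiberwise_of_maps_to fun p hp => (hμ.1 p hp).1]
  refine sum_congr rfl fun i _ => ?_
  rw [matchedWorkers, sum_image (hμ.injOn_snd.mono (coe_subset.mpr (filter_subset _ _)))]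
  exact sum_congr rfl fun p hp => by rw [(mem_filter.mp hp).2]

lemma matchValue_eq_sum_profit_add_sum_salary (hμ : IsMatching r S T μ) (y : W → ℝ) :
    matchValue A μ =
      ∑ i ∈ S, ∑ j ∈ matchedWorkers μ i, (A i j - y j) + ∑ j ∈ μ.image Prod.snd, y j := by
  rw [hμ.sum_sum_matchedWorkers fun i j => A i j - y j, sum_image hμ.injOn_snd, ← sum_add_distrib]
  simp only [sub_add_cancel, matchValue]

lemma matchValue_le_sum_payoffs (hμ : IsMatching r S T μ) (hy : ∀ j, 0 ≤ y j)
    (hx : ∀ i (T' : Finset W), T'.card ≤ r i → ∑ j ∈ T', (A i j - y j) ≤ x i) :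
    matchValue A μ ≤ ∑ i ∈ S, x i + ∑ j ∈ T, y j := by
  rw [hμ.matchValue_eq_sum_profit_add_sum_salary y]
  exact add_le_add (sum_le_sum fun i _ => hx i _ (hμ.card_matchedWorkers_le i))
    (sum_le_sum_of_subset_of_nonneg hμ.image_snd_subset fun j _ _ => hy j)

end IsMatching

end Matchings

variable {A : F → W → ℝ} {r : F → ℕ} {μ : Finset (F × W)} {x : F → ℝ} {y : W → ℝ}

lemma vGamma_le_iff {S : Finset F} {T : Finset W} {b : ℝ} :
    vGamma A r S T ≤ b ↔ ∀ μ, IsMatching r S T μ → matchValue A μ ≤ b := by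
  refine (sup'_le_iff _ _).trans (forall_congr' fun μ => imp_congr_left ?_)
  rw [mem_filter, mem_powerset]
  exact and_iff_right_of_imp fun hμ p hp => mem_product.mpr (hμ.1 p hp)

lemma gameValue_eq_vGamma (C : Finset (F ⊕ W)) :
    gameValue A r C = vGamma A r C.toLeft C.toRight := by
  have hF : firmPart C = C.toLeft := by ext; simp [firmPart]
  have hW : workerPart C = C.toRight := by ext; simp [workerPart]
  rw [gameValue, hF, hW]

lemma gameValue_univ (hμ : IsOptimalMatching A r μ) :
    gameValue A r univ = matchValue A μ := by
  rw [gameValue_eq_vGamma, toLeft_univ, toRight_univ]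
  exact le_antisymm (vGamma_le_iff.mpr hμ.2) (vGamma_le_iff.mp le_rfl μ hμ.1)

lemma forall_gameValue_le_sum_iff_matchValue_le :
    (∀ C, gameValue A r C ≤ ∑ k ∈ C, Sum.elim x y k) ↔
      ∀ S T μ, IsMatching r S T μ → matchValue A μ ≤ ∑ i ∈ S, x i + ∑ j ∈ T, y j := by
  simp only [gameValue_eq_vGamma, vGamma_le_iff, sum_sum_eq_sum_toLeft_add_sum_toRight,
    Sum.elim_inl, Sum.elim_inr]
  exact ⟨fun h S T => by simpa only [toLeft_disjSum, toRight_disjSum] using h (S.disjSum T),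
    fun h C => h C.toLeft C.toRight⟩

theorem forall_gameValue_le_sum_iff :
    (∀ C, gameValue A r C ≤ ∑ k ∈ C, Sum.elim x y k) ↔
      (∀ j, 0 ≤ y j) ∧
        ∀ i (T : Finset W), T.card ≤ r i → ∑ j ∈ T, (A i j - y j) ≤ x i := by
  rw [forall_gameValue_le_sum_iff_matchValue_le]
  refine ⟨fun h => ⟨fun j => ?_, fun i T hT => ?_⟩,
    fun h S T μ hμ => hμ.matchValue_le_sum_payoffs h.1 h.2⟩
  · simpa [matchValue] using h ∅ {j} ∅ (empty_isMatching r ∅ {j})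
  · have hvalue := h {i} T _ (isMatching_singleton_product hT)
    rw [matchValue_singleton_product, sum_singleton] at hvalue
    rwa [sum_sub_distrib, sub_le_iff_le_add]

theorem IsMatching.matchValue_eq_sum_payoffs_iff (hμ : IsMatching r univ univ μ)
    (hy : ∀ j, 0 ≤ y j) (hx : ∀ i, ∑ j ∈ matchedWorkers μ i, (A i j - y j) ≤ x i) :
    matchValue A μ = ∑ i, x i + ∑ j, y j ↔
      (∀ i, x i = ∑ j ∈ matchedWorkers μ i, (A i j - y j)) ∧
        ∀ j ∉ μ.image Prod.snd, y j = 0 := by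
  have hfirms : ∑ i, ∑ j ∈ matchedWorkers μ i, (A i j - y j) = ∑ i, x i ↔
      ∀ i, x i = ∑ j ∈ matchedWorkers μ i, (A i j - y j) := by
    simp only [sum_eq_sum_iff_of_le fun i _ => hx i, mem_univ, forall_const, eq_comm]
  have hworkers : ∑ j ∈ μ.image Prod.snd, y j = ∑ j, y j ↔ ∀ j ∉ μ.image Prod.snd, y j = 0 := by
    rw [← sum_add_sum_compl (μ.image Prod.snd) y, left_eq_add,
      sum_eq_zero_iff_of_nonneg fun j _ => hy j]
    simp only [mem_compl]
  rw [hμ.matchValue_eq_sum_profit_add_sum_salary y, add_eq_add_iff_eq_and_eq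
    (sum_le_sum fun i _ => hx i)
    (sum_le_sum_of_subset_of_nonneg (subset_univ _) fun j _ _ => hy j), hfirms, hworkers]

/-- `(μ, y)` is a competitive equilibrium of a market that need not be capacity-balanced: `μ` may
leave workers unmatched, and these must receive a zero salary. That `μ` is a matching is left to a
separate hypothesis. -/
structure IsCompEq (A : F → W → ℝ) (r : F → ℕ) (μ : Finset (F × W)) (y : W → ℝ) : Prop where
  nonneg : ∀ j, 0 ≤ y j
  profit_le : ∀ i (T : Finset W), T.card ≤ r i →
    ∑ j ∈ T, (A i j - y j) ≤ ∑ j ∈ matchedWorkers μ i, (A i j - y j)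
  eq_zero_of_unmatched : ∀ j ∉ μ.image Prod.snd, y j = 0

theorem inCore_iff_isCompEq (hμ : IsOptimalMatching A r μ) :
    inCore (gameValue A r) (Sum.elim x y) ↔
      IsCompEq A r μ y ∧ ∀ i, x i = ∑ j ∈ matchedWorkers μ i, (A i j - y j) := by
  rw [inCore, gameValue_univ hμ, Fintype.sum_sum_type, forall_gameValue_le_sum_iff,
    eq_comm (b := matchValue A μ)]
  simp only [Sum.elim_inl, Sum.elim_inr]
  constructor
  · rintro ⟨hefficient, hy, hx⟩
    obtain ⟨hprofit, hunmatched⟩ := (hμ.1.matchValue_eq_sum_payoffs_iff hy fun i =>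
      hx i _ (hμ.1.card_matchedWorkers_le i)).mp hefficient
    exact ⟨⟨hy, fun i T hT => (hx i T hT).trans_eq (hprofit i), hunmatched⟩, hprofit⟩
  · rintro ⟨heq, hprofit⟩
    exact ⟨(hμ.1.matchValue_eq_sum_payoffs_iff heq.nonneg fun i => (hprofit i).ge).mpr
        ⟨hprofit, heq.eq_zero_of_unmatched⟩,
      heq.nonneg, fun i T hT => (heq.profit_le i T hT).trans_eq (hprofit i).symm⟩

theorem core_iff_competitive_general (hμ : IsOptimalMatching A r μ) :
    (∀ (x : F → ℝ) (y : W → ℝ),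
        inCore (gameValue A r) (Sum.elim x y) ↔
          (IsCompEq A r μ y ∧ ∀ i, x i = ∑ j ∈ matchedWorkers μ i, (A i j - y j))) ∧
    (∀ y : W → ℝ,
        (∃ x : F → ℝ, inCore (gameValue A r) (Sum.elim x y)) ↔ IsCompEq A r μ y) := by
  refine ⟨fun x y => inCore_iff_isCompEq hμ, fun y => ?_⟩
  simp only [inCore_iff_isCompEq hμ, exists_and_left, ← funext_iff, exists_eq, and_true]

section AssignmentFunctions

omit [Fintype F]

variable {m : W → F}

lemma matchedWorkers_matchingOfFn (i : F) :
    matchedWorkers (matchingOfFn m) i = assignedTo m i := by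
  ext j
  simp [matchedWorkers, matchingOfFn, assignedTo]

lemma image_snd_matchingOfFn : (matchingOfFn m).image Prod.snd = univ := by
  ext j
  simp [matchingOfFn]

lemma isCompEq_matchingOfFn : IsCompEq A r (matchingOfFn m) y ↔ IsCompEqBal A r m y := by
  refine ⟨fun h => ⟨h.nonneg, ?_⟩, fun h => ⟨h.1, ?_, ?_⟩⟩
  · simpa only [matchedWorkers_matchingOfFn] using h.profit_le
  · simpa only [matchedWorkers_matchingOfFn] using h.2
  · simp [image_snd_matchingOfFn]

end AssignmentFunctions

/-- `(x,y)` is in the core iff `(m,y)` is a competitive equilibrium and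
each firm receives its net profit; in particular, the projection of the core to the
workers' coordinates is the set of competitive salary vectors. -/
theorem core_iff_competitive (A : F → W → ℝ) (r : F → ℕ)
    (hA : ∀ i j, 0 ≤ A i j) (hbal : ∑ i, r i = Fintype.card W)
    (m : W → F) (hm : IsBalancedOptimal A r m) :
    (∀ (x : F → ℝ) (y : W → ℝ),
        inCore (gameValue A r) (Sum.elim x y) ↔
          (IsCompEqBal A r m y ∧
            ∀ i : F, x i = ∑ j ∈ assignedTo m i, (A i j - y j))) ∧
    (∀ y : W → ℝ,
        (∃ x : F → ℝ, inCore (gameValue A r) (Sum.elim x y)) ↔ IsCompEqBal A r m y) := by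
  simpa only [isCompEq_matchingOfFn, matchedWorkers_matchingOfFn] using
    core_iff_competitive_general hm.2

end
end

section
/- Let γ=(F,W,A,r) be a capacity-balanced many-to-one assignment market with optimal matching μ. A vector y∈C(W) is an extreme point of C(W) if and only if the base-graph of the associated tight digraph (W_0, E^y) is connected. -/
open Finset
open scoped Classical

noncomputable section

variable {F W : Type*} [Fintype F] [Fintype W]

/-!
Every constraint defining `C(W)` bounds below the difference `y_v - y_u` of the values of `y`,
extended by `y_0 = 0`, at two nodes of `W ∪ {0}`, and the arcs of the tight digraph are the
constraints holding with equality. A point of a polyhedron with finitely many constraints is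
extreme iff the only vector annihilated by all its tight functionals is `0`. Here such a vector is
a function on `W ∪ {0}` that vanishes at `0` and is constant along the tight arcs, hence on the
components of the base-graph: it is forced to be `0` iff every node lies in the component of `0`.
-/

section Polyhedron

variable {𝕜 E ι : Type*} [Field 𝕜] [LinearOrder 𝕜] [IsStrictOrderedRing 𝕜]
  [AddCommGroup E] [Module 𝕜 E]

/-- The polyhedron cut out by the linear inequalities `c i ≤ ℓ i x`, for `i` in an index type that
is not required to be finite. -/
def linearPolyhedron (ℓ : ι → Module.Dual 𝕜 E) (c : ι → 𝕜) : Set E :=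
  {x | ∀ i, c i ≤ ℓ i x}

lemma dual_apply_eq_of_mem_openSegment (f : Module.Dual 𝕜 E) {b : 𝕜} {x x₁ x₂ : E}
    (h₁ : b ≤ f x₁) (h₂ : b ≤ f x₂) (hx : x ∈ openSegment 𝕜 x₁ x₂) (hb : f x = b) :
    f x₁ = b := by
  obtain ⟨s, t, hs, ht, hst, rfl⟩ := hx
  have hsum : s * (f x₁ - b) + t * (f x₂ - b) = 0 := by
    simp only [map_add, map_smul, smul_eq_mul] at hb
    linear_combination hb - b * hst
  have hzero : s * (f x₁ - b) = 0 :=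
    ((add_eq_zero_iff_of_nonneg (mul_nonneg hs.le (sub_nonneg.2 h₁))
      (mul_nonneg ht.le (sub_nonneg.2 h₂))).1 hsum).1
  exact sub_eq_zero.1 ((mul_eq_zero_iff_left hs.ne').1 hzero)

lemma exists_pos_mul_abs_le_sub {b s t : 𝕜} (hbs : b ≤ s) (ht : s = b → t = 0) :
    ∃ δ > 0, δ * |t| ≤ s - b := by
  rcases hbs.eq_or_lt with rfl | hlt
  · exact ⟨1, one_pos, by simp [ht rfl]⟩
  · obtain ⟨δ, hδ, hlt'⟩ := exists_pos_mul_lt (sub_pos.2 hlt) |t|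
    exact ⟨δ, hδ, (mul_comm δ |t|).trans_le hlt'.le⟩

lemma exists_pos_sub_add_smul_mem_linearPolyhedron [Finite ι] {ℓ : ι → Module.Dual 𝕜 E} {c : ι → 𝕜}
    {x d : E} (hx : x ∈ linearPolyhedron ℓ c) (hd : ∀ i, ℓ i x = c i → ℓ i d = 0) :
    ∃ ε > (0 : 𝕜), x - ε • d ∈ linearPolyhedron ℓ c ∧ x + ε • d ∈ linearPolyhedron ℓ c := by
  choose δ hδ hδd using fun i ↦ exists_pos_mul_abs_le_sub (hx i) (hd i)
  obtain ⟨ε, hε, hεδ⟩ := Pi.exists_forall_pos_add_lt hδ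
  have hslack (i : ι) : |ε * ℓ i d| ≤ ℓ i x - c i := by
    rw [abs_mul, abs_of_pos hε]
    have hle : ε ≤ δ i := (zero_add ε).symm.trans_le (hεδ i).le
    exact (mul_le_mul_of_nonneg_right hle (abs_nonneg _)).trans (hδd i)
  refine ⟨ε, hε, fun i ↦ ?_, fun i ↦ ?_⟩ <;>
    simp only [map_sub, map_add, map_smul, smul_eq_mul] <;>
    linarith [abs_le.1 (hslack i)]

theorem mem_extremePoints_linearPolyhedron_iff [Finite ι] {ℓ : ι → Module.Dual 𝕜 E} {c : ι → 𝕜}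
    {x : E} (hx : x ∈ linearPolyhedron ℓ c) :
    x ∈ (linearPolyhedron ℓ c).extremePoints 𝕜 ↔
      ∀ d, (∀ i, ℓ i x = c i → ℓ i d = 0) → d = 0 := by
  rw [mem_extremePoints_iff_left]
  constructor
  · rintro ⟨-, hext⟩ d hd
    obtain ⟨ε, hε, hsub, hadd⟩ := exists_pos_sub_add_smul_mem_linearPolyhedron hx hd
    have : Invertible (2 : 𝕜) := invertibleOfNonzero two_ne_zero
    have hfix : x - ε • d = x := hext _ hsub _ hadd (mem_openSegment_sub_add x (ε • d))
    exact (smul_eq_zero_iff_right hε.ne').1 (sub_eq_self.1 hfix)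
  · refine fun hker ↦ ⟨hx, fun x₁ h₁ x₂ h₂ hseg ↦ sub_eq_zero.1 (hker _ fun i hi ↦ ?_)⟩
    rw [map_sub, hi, sub_eq_zero]
    exact dual_apply_eq_of_mem_openSegment (ℓ i) (h₁ i) (h₂ i) hseg hi

end Polyhedron

section EqvGen

open Relation

variable {V M : Type*} {R : V → V → Prop}

lemma eq_of_eqvGen {f : V → M} (hf : ∀ u v, R u v → f u = f v) {u v : V} (h : EqvGen R u v) :
    f u = f v :=
  congrArg (Quot.lift f hf) (Quot.eqvGen_sound h)

theorem forall_eqvGen_iff_forall_eq_zero [Zero M] [Nontrivial M] (o : V) :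
    (∀ u v, EqvGen R u v) ↔ ∀ f : V → M, f o = 0 → (∀ u v, R u v → f u = f v) → f = 0 := by
  constructor
  · exact fun hconn f ho hf ↦ funext fun v ↦ (eq_of_eqvGen hf (hconn v o)).trans ho
  · intro hzero
    obtain ⟨a, ha⟩ := exists_ne (0 : M)
    let f : V → M := fun v ↦ if EqvGen R o v then 0 else a
    have hf : f = 0 := by
      refine hzero f (if_pos (.refl o)) fun u v huv ↦ ?_
      have hiff : EqvGen R o u ↔ EqvGen R o v :=
        ⟨fun h ↦ h.trans _ _ _ (.rel _ _ huv), fun h ↦ h.trans _ _ _ (.symm _ _ (.rel _ _ huv))⟩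
      simp only [f, hiff]
    have hreach (v : V) : EqvGen R o v := by
      by_contra hv
      exact ha ((if_neg hv).symm.trans (congrFun hf v))
    exact fun u v ↦ ((hreach u).symm _ _).trans _ _ _ (hreach v)

end EqvGen

section TightDigraph

omit [Fintype F] [Fintype W]

/-- The extension of a salary vector to `W ∪ {0}` by `y_0 = 0`, as a linear map. -/
def grounded : (W → ℝ) →ₗ[ℝ] (Option W → ℝ) where
  toFun y u := u.elim 0 y
  map_add' y z := by ext (_ | _) <;> simp
  map_smul' a y := by ext (_ | _) <;> simp

/-- The pairs of nodes of `W ∪ {0}` carrying a constraint of `C(W)`, that is, those that can be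
arcs of a tight digraph. -/
def ConstrainedPair (m : W → F) : Option W → Option W → Prop
  | none, none => False
  | none, some _ => True
  | some _, none => True
  | some j, some k => m j ≠ m k

/-- The lower bound that `C(W)` imposes on `y_v - y_u` at a constrained pair `(u, v)`; the value at
other pairs is irrelevant. -/
def salaryGap (A : F → W → ℝ) (m : W → F) : Option W → Option W → ℝ
  | none, _ => 0
  | some j, none => -A (m j) j
  | some j, some k => A (m j) k - A (m j) j

/-- The functional `y ↦ y_v - y_u` of salary vectors, for nodes `u` and `v` of `W ∪ {0}`. -/
def salaryDiff (u v : Option W) : Module.Dual ℝ (W → ℝ) :=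
  LinearMap.proj v ∘ₗ grounded - LinearMap.proj u ∘ₗ grounded

lemma salaryDiff_apply (u v : Option W) (y : W → ℝ) :
    salaryDiff u v y = grounded y v - grounded y u :=
  rfl

lemma salaryDiff_eq_zero_iff {u v : Option W} {d : W → ℝ} :
    salaryDiff u v d = 0 ↔ grounded d u = grounded d v :=
  sub_eq_zero.trans eq_comm

lemma exists_grounded_eq {f : Option W → ℝ} (hf : f none = 0) : ∃ d, grounded d = f :=
  ⟨f ∘ some, funext <| Option.rec hf.symm fun _ ↦ rfl⟩

lemma grounded_eq_zero_iff {d : W → ℝ} : grounded d = 0 ↔ d = 0 :=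
  ⟨fun h ↦ funext fun j ↦ congrFun h (some j), fun h ↦ h ▸ map_zero grounded⟩

lemma CW_eq_linearPolyhedron (A : F → W → ℝ) (m : W → F) :
    CW A m = linearPolyhedron
      (fun e : {e : Option W × Option W // ConstrainedPair m e.1 e.2} ↦ salaryDiff e.1.1 e.1.2)
      (fun e ↦ salaryGap A m e.1.1 e.1.2) := by
  ext y
  simp [CW, linearPolyhedron, salaryDiff_apply, grounded, salaryGap, ConstrainedPair,
    Option.forall, forall_and, and_assoc, and_left_comm]

lemma tightArc_iff_salaryDiff_eq {A : F → W → ℝ} {m : W → F} {y : W → ℝ} {u v : Option W} :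
    tightArc A m y u v ↔ ConstrainedPair m u v ∧ salaryDiff u v y = salaryGap A m u v := by
  cases u <;> cases v <;>
    simp [tightArc, ConstrainedPair, salaryDiff_apply, grounded, salaryGap]

theorem mem_extremePoints_CW_iff [Finite W] {A : F → W → ℝ} {m : W → F} {y : W → ℝ}
    (hy : y ∈ CW A m) :
    y ∈ (CW A m).extremePoints ℝ ↔
      ∀ d, (∀ u v, tightArc A m y u v → grounded d u = grounded d v) → d = 0 := by
  rw [CW_eq_linearPolyhedron] at hy ⊢
  simp only [mem_extremePoints_linearPolyhedron_iff hy, tightArc_iff_salaryDiff_eq, Subtype.forall,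
    Prod.forall, and_imp, salaryDiff_eq_zero_iff]

theorem extreme_iff_baseGraph_connected_general [Finite W] (A : F → W → ℝ) (m : W → F)
    {y : W → ℝ} (hy : y ∈ CW A m) :
    y ∈ Set.extremePoints ℝ (CW A m) ↔
      ∀ u v : Option W,
        Relation.ReflTransGen (fun a b => tightArc A m y a b ∨ tightArc A m y b a) u v := by
  have hgen : Relation.ReflTransGen (fun a b => tightArc A m y a b ∨ tightArc A m y b a) =
      Relation.EqvGen (tightArc A m y) :=
    Relation.EqvGen.reflTransGen_symmGen _
  rw [hgen, mem_extremePoints_CW_iff hy, forall_eqvGen_iff_forall_eq_zero (M := ℝ) none]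
  constructor
  · intro hker f hf hconst
    obtain ⟨d, rfl⟩ := exists_grounded_eq hf
    exact grounded_eq_zero_iff.2 (hker d hconst)
  · exact fun hker d hconst ↦ grounded_eq_zero_iff.1 (hker (grounded d) rfl hconst)

end TightDigraph

/-- a competitive salary vector is an extreme point of `C(W)` iff the
base-graph of its tight digraph is connected. -/
theorem extreme_iff_baseGraph_connected (A : F → W → ℝ) (r : F → ℕ)
    (hA : ∀ i j, 0 ≤ A i j) (hbal : ∑ i, r i = Fintype.card W)
    (m : W → F) (hm : IsBalancedOptimal A r m)
    (y : W → ℝ) (hy : y ∈ CW A m) :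
    y ∈ Set.extremePoints ℝ (CW A m) ↔
      ∀ u v : Option W,
        Relation.ReflTransGen (fun a b => tightArc A m y a b ∨ tightArc A m y b a) u v :=
  extreme_iff_baseGraph_connected_general A m hy

end
end

section
/- Let γ=(F,W,A,r) be a capacity-balanced many-to-one assignment market with optimal matching μ. A vector y∈C(W) is the coordinatewise minimum element of C(W) (the minimum competitive salary vector) if and only if its tight digraph (W_0, E^y) contains a directed spanning tree rooted at node 0 with all arcs directed away from node 0. -/
open Finset
open scoped Classical

noncomputable section

variable {F W : Type*} [Fintype F] [Fintype W]

/-!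
`C(W)`, extended by `y₀ = 0`, is the solution set of a system of difference constraints
`c u v ≤ p v - p u` on `W ∪ {0}`. Along an arc that is tight at `p`, any other solution rises at
least as much as `p`, so `p` is minimal at every node that tight arcs connect to `0`. Conversely, if
some nodes cannot be reached from `0`, every constraint on an arc entering the set of unreachable
nodes is slack, and lowering `p` on that set by the least of these finitely many slacks gives a
smaller solution.
-/

section DifferenceConstraints

variable {V R : Type*} [AddCommGroup R] [LinearOrder R] [IsOrderedAddMonoid R]
  {E : V → V → Prop} {c : V → V → R} {s : V} {p q : V → R}

/-- `p` solves the system of difference constraints with one constraint `c u v ≤ p v - p u` for each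
arc of the digraph `E`, normalized to vanish at the source `s`. -/
structure IsFeasiblePotential (E : V → V → Prop) (c : V → V → R) (s : V) (p : V → R) : Prop where
  source_eq_zero : p s = 0
  le_sub : ∀ ⦃u v⦄, E u v → c u v ≤ p v - p u

/-- The digraph of the arcs of `E` whose difference constraint holds with equality at `p`. -/
def IsTight (E : V → V → Prop) (c : V → V → R) (p : V → R) (u v : V) : Prop :=
  E u v ∧ p v - p u = c u v

namespace IsFeasiblePotential

lemma sub_le_sub_of_tight_path (hq : IsFeasiblePotential E c s q) {u v : V}
    (huv : Relation.ReflTransGen (IsTight E c p) u v) : p v - p u ≤ q v - q u := by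
  induction huv with
  | refl => simp only [sub_self, le_refl]
  | @tail v w _ hvw ih =>
    calc p w - p u = (p w - p v) + (p v - p u) := (sub_add_sub_cancel _ _ _).symm
      _ ≤ (q w - q v) + (q v - q u) := add_le_add (hvw.2.trans_le (hq.le_sub hvw.1)) ih
      _ = q w - q u := sub_add_sub_cancel _ _ _

lemma sub_indicator (hp : IsFeasiblePotential E c s p) {U : Set V} (hs : s ∉ U) {ε : R}
    (hε : 0 ≤ ε) (hslack : ∀ u ∉ U, ∀ v ∈ U, E u v → ε ≤ p v - p u - c u v) :
    IsFeasiblePotential E c s (p - U.indicator fun _ => ε) where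
  source_eq_zero := by
    rw [Pi.sub_apply, hp.source_eq_zero, Set.indicator_of_notMem hs, sub_zero]
  le_sub u v huv := by
    have hc := hp.le_sub huv
    by_cases hu : u ∈ U <;> by_cases hv : v ∈ U <;>
      simp only [Pi.sub_apply, hu, hv, Set.indicator_of_mem, Set.indicator_of_notMem, not_false_iff,
        sub_zero, sub_sub_sub_cancel_right]
    · exact hc
    · exact hc.trans (sub_le_sub_left (sub_le_self _ hε) _)
    · rw [sub_right_comm]
      exact le_sub_comm.mp (hslack u hu v hv huv)
    · exact hc

lemma exists_pos_le_slack [Finite V] [Nontrivial R] (hp : IsFeasiblePotential E c s p) {U : Set V}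
    (hU : ∀ u ∉ U, ∀ v ∈ U, ¬ IsTight E c p u v) :
    ∃ ε > 0, ∀ u ∉ U, ∀ v ∈ U, E u v → ε ≤ p v - p u - c u v := by
  let EnteringArc := {a : V × V // a.1 ∉ U ∧ a.2 ∈ U ∧ E a.1 a.2}
  let slack (a : EnteringArc) : Set.Ioi (0 : R) :=
    ⟨p a.1.2 - p a.1.1 - c a.1.1 a.1.2, by
      obtain ⟨⟨u, v⟩, hu, hv, huv⟩ := a
      exact sub_pos.mpr <| (hp.le_sub huv).lt_of_ne fun h => hU u hu v hv ⟨huv, h.symm⟩⟩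
  obtain ⟨ε, hε⟩ := Finite.exists_ge slack
  exact ⟨ε, ε.2, fun u hu v hv huv => hε ⟨(u, v), hu, hv, huv⟩⟩

theorem isLeast_iff_forall_tight_path [Finite V] [Nontrivial R]
    (hp : IsFeasiblePotential E c s p) :
    IsLeast {q | IsFeasiblePotential E c s q} p ↔
      ∀ v, Relation.ReflTransGen (IsTight E c p) s v := by
  constructor
  · intro hleast
    let U : Set V := {v | ¬ Relation.ReflTransGen (IsTight E c p) s v}
    have hs : s ∉ U := not_not_intro .refl
    have hU : ∀ u ∉ U, ∀ v ∈ U, ¬ IsTight E c p u v :=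
      fun u hu v hv huv => hv ((not_not.mp hu).tail huv)
    obtain ⟨ε, hε, hslack⟩ := hp.exists_pos_le_slack hU
    intro v
    by_contra hv
    have hle : p v ≤ p v - U.indicator (fun _ => ε) v :=
      hleast.2 (hp.sub_indicator hs hε.le hslack) v
    rw [Set.indicator_of_mem (show v ∈ U from hv)] at hle
    exact hle.not_gt (sub_lt_self _ hε)
  · refine fun hpath => ⟨hp, fun q hq v => ?_⟩
    simpa only [hp.source_eq_zero, hq.source_eq_zero, sub_zero] using
      hq.sub_le_sub_of_tight_path (hpath v)

end IsFeasiblePotential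

end DifferenceConstraints

section SalaryPotential

variable {Firm Worker : Type*} {A : Firm → Worker → ℝ} {m : Worker → Firm} {y : Worker → ℝ}

/-- The pairs of nodes of `W ∪ {0}` joined by one of the inequalities defining `C(W)`; as for
`tightArc`, node `0` is `none`. -/
def salaryArc (m : Worker → Firm) : Option Worker → Option Worker → Prop
  | none, none => False
  | none, some _ => True
  | some _, none => True
  | some j, some k => m j ≠ m k

/-- The lower bounds on salary differences in the inequalities defining `C(W)`, where
`y j ≤ A (m j) j` is read as `-A (m j) j ≤ 0 - y j`. The value at `(none, none)` is immaterial. -/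
def salaryBound (A : Firm → Worker → ℝ) (m : Worker → Firm) : Option Worker → Option Worker → ℝ
  | none, _ => 0
  | some j, none => -A (m j) j
  | some j, some k => A (m j) k - A (m j) j

/-- The extension of a salary vector to `W ∪ {0}` by `y₀ = 0`. -/
def salaryPotential (y : Worker → ℝ) (u : Option Worker) : ℝ := u.elim 0 y

lemma isFeasiblePotential_salaryPotential_iff :
    IsFeasiblePotential (salaryArc m) (salaryBound A m) none (salaryPotential y) ↔ y ∈ CW A m := by
  constructor
  · refine fun h => ⟨fun j => ⟨?_, ?_⟩, fun j k hjk => ?_⟩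
    · simpa [salaryBound, salaryPotential] using
        h.le_sub (show salaryArc m none (some j) from trivial)
    · simpa [salaryBound, salaryPotential] using
        h.le_sub (show salaryArc m (some j) none from trivial)
    · exact h.le_sub (show salaryArc m (some j) (some k) from hjk)
  · rintro ⟨hbounds, hdiff⟩
    refine ⟨rfl, ?_⟩
    rintro (_ | j) (_ | k) hjk
    · exact hjk.elim
    · simpa [salaryBound, salaryPotential] using (hbounds k).1
    · simpa [salaryBound, salaryPotential] using (hbounds j).2
    · exact hdiff j k hjk

lemma isTight_salaryPotential :
    IsTight (salaryArc m) (salaryBound A m) (salaryPotential y) = tightArc A m y := by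
  ext (_ | j) (_ | k) <;> simp [IsTight, salaryArc, salaryBound, salaryPotential, tightArc]

lemma isLeast_salaryPotential_iff :
    IsLeast {p | IsFeasiblePotential (salaryArc m) (salaryBound A m) none p} (salaryPotential y) ↔
      IsLeast (CW A m) y := by
  refine and_congr isFeasiblePotential_salaryPotential_iff ⟨fun hmin y' hy' j => ?_, ?_⟩
  · exact hmin (isFeasiblePotential_salaryPotential_iff.mpr hy') (some j)
  · intro hmin p hp
    have hp_eq : p = salaryPotential fun j => p (some j) := by
      ext (_ | j)
      exacts [hp.source_eq_zero, rfl]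
    have hp_mem : (fun j => p (some j)) ∈ CW A m :=
      isFeasiblePotential_salaryPotential_iff.mp (hp_eq ▸ hp)
    rintro (_ | j)
    exacts [hp.source_eq_zero.ge, hmin hp_mem j]

theorem min_salary_iff_zero_sourced_general [Finite Worker] (hy : y ∈ CW A m) :
    (∀ y' ∈ CW A m, ∀ j, y j ≤ y' j) ↔
      ∀ u : Option Worker, Relation.ReflTransGen (tightArc A m y) none u :=
  calc (∀ y' ∈ CW A m, ∀ j, y j ≤ y' j)
    _ ↔ IsLeast (CW A m) y := (and_iff_right hy).symm
    _ ↔ IsLeast {p | IsFeasiblePotential (salaryArc m) (salaryBound A m) none p}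
          (salaryPotential y) := isLeast_salaryPotential_iff.symm
    _ ↔ ∀ u, Relation.ReflTransGen
          (IsTight (salaryArc m) (salaryBound A m) (salaryPotential y)) none u :=
        (isFeasiblePotential_salaryPotential_iff.mpr hy).isLeast_iff_forall_tight_path
    _ ↔ ∀ u, Relation.ReflTransGen (tightArc A m y) none u := by rw [isTight_salaryPotential]

end SalaryPotential

/-- `y` is the coordinatewise minimum element of `C(W)` iff its tight
digraph contains a `0`-sourced directed spanning tree, i.e. every node is reachable
from node `0` by a directed path of tight arcs. -/
theorem min_salary_iff_zero_sourced (A : F → W → ℝ) (r : F → ℕ)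
    (hA : ∀ i j, 0 ≤ A i j) (hbal : ∑ i, r i = Fintype.card W)
    (m : W → F) (hm : IsBalancedOptimal A r m)
    (y : W → ℝ) (hy : y ∈ CW A m) :
    (∀ y' ∈ CW A m, ∀ j : W, y j ≤ y' j) ↔
      ∀ u : Option W, Relation.ReflTransGen (tightArc A m y) none u :=
  min_salary_iff_zero_sourced_general hy

end
end

section
/- Let γ=(F,W,A,r) be a capacity-balanced many-to-one assignment market with optimal matching μ. A vector y∈C(W) is the coordinatewise maximum element of C(W) (the maximum competitive salary vector) if and only if its tight digraph (W_0, E^y) contains a directed spanning tree rooted at node 0 with all arcs directed towards node 0. -/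
open Finset
open scoped Classical

noncomputable section

variable {F W : Type*} [Fintype F] [Fintype W]

/-!
Put `y₀ = 0`. Then `C(W)` is cut out by lower bounds on differences `y_v - y_u`, and the arcs of the
tight digraph are the bounds that hold with equality. Passing from `y` to another element `y'`, the
gain `y' - y` can only increase along a tight arc; it vanishes at `0`, so it is nonpositive at every
node with a tight path to `0`. Conversely, no tight arc leaves the set of nodes without such a path,
so all their coordinates can be raised together by a small amount.
-/

/-- A system of difference constraints `bound u v ≤ p v - p u`, one for each pair of nodes with
`arc u v`; the values of `bound` at other pairs are irrelevant. -/
structure DifferenceSystem (V G : Type*) where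
  arc : V → V → Prop
  bound : V → V → G

namespace DifferenceSystem

variable {V G : Type*} [AddCommGroup G] {D : DifferenceSystem V G} {p q : V → G} {u v : V}

section Preorder

variable [Preorder G]

/-- The potential `p` satisfies every constraint of `D`. -/
def IsFeasible (D : DifferenceSystem V G) (p : V → G) : Prop :=
  ∀ ⦃u v⦄, D.arc u v → D.bound u v ≤ p v - p u

/-- The arcs of the tight digraph of `D` at `p`: constraints that hold with equality. -/
def IsTight (D : DifferenceSystem V G) (p : V → G) (u v : V) : Prop :=
  D.arc u v ∧ p v - p u = D.bound u v

variable [IsOrderedAddMonoid G]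

theorem IsFeasible.sub_le_sub_of_isTight (hq : D.IsFeasible q) (h : D.IsTight p u v) :
    q u - p u ≤ q v - p v := by
  have hsub : p v - p u ≤ q v - q u := h.2.trans_le (hq h.1)
  rwa [sub_le_sub_iff, add_comm (q u), ← sub_le_sub_iff]

theorem IsFeasible.sub_le_sub_of_reflTransGen (hq : D.IsFeasible q)
    (h : Relation.ReflTransGen (D.IsTight p) u v) : q u - p u ≤ q v - p v := by
  induction h with
  | refl => exact le_rfl
  | tail _ htight ih => exact ih.trans (hq.sub_le_sub_of_isTight htight)

end Preorder

section LinearOrder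

variable [LinearOrder G] [IsOrderedAddMonoid G] [Finite V] [Nontrivial G]

theorem IsFeasible.exists_pos_le_slack (hp : D.IsFeasible p) {S : Set V}
    (hS : ∀ u ∈ S, ∀ v ∉ S, ¬ D.IsTight p u v) :
    ∃ ε > 0, ∀ u ∈ S, ∀ v ∉ S, D.arc u v → ε ≤ p v - p u - D.bound u v := by
  have slack_pos (e : {e : V × V // e.1 ∈ S ∧ e.2 ∉ S ∧ D.arc e.1 e.2}) :
      0 < p e.1.2 - p e.1.1 - D.bound e.1.1 e.1.2 :=
    have ⟨_, hu, hv, harc⟩ := e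
    sub_pos.2 <| (hp harc).lt_of_ne fun heq => hS _ hu _ hv ⟨harc, heq.symm⟩
  obtain ⟨⟨ε, hε⟩, hle⟩ := Finite.exists_ge fun e => (⟨_, slack_pos e⟩ : Set.Ioi (0 : G))
  exact ⟨ε, hε, fun u hu v hv harc => hle ⟨(u, v), hu, hv, harc⟩⟩

theorem IsFeasible.exists_pos_add_indicator (hp : D.IsFeasible p)
    {S : Set V} (hS : ∀ u ∈ S, ∀ v ∉ S, ¬ D.IsTight p u v) :
    ∃ ε > 0, D.IsFeasible (p + S.indicator fun _ => ε) := by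
  obtain ⟨ε, hε, hslack⟩ := hp.exists_pos_le_slack hS
  refine ⟨ε, hε, fun u v harc => ?_⟩
  have hbound := hp harc
  by_cases hu : u ∈ S <;> by_cases hv : v ∈ S <;>
    simp only [Pi.add_apply, Set.indicator_of_mem, Set.indicator_of_notMem, hu, hv,
      not_false_eq_true, add_zero, add_sub_add_right_eq_sub]
  · exact hbound
  · rw [← sub_sub]
    exact le_sub_comm.1 (hslack u hu v hv harc)
  · rw [add_sub_right_comm]
    exact le_add_of_le_of_nonneg hbound hε.le
  · exact hbound

theorem IsFeasible.mem_upperBounds_iff (hp : D.IsFeasible p) (root : V) :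
    p ∈ upperBounds {q | D.IsFeasible q ∧ q root = p root} ↔
      ∀ u, Relation.ReflTransGen (D.IsTight p) u root := by
  constructor
  · intro hmax
    by_contra! ⟨u, hu⟩
    let S : Set V := {v | ¬ Relation.ReflTransGen (D.IsTight p) v root}
    obtain ⟨ε, hε, hraise⟩ := hp.exists_pos_add_indicator (S := S)
      fun v hv w hw htight => hv (.head htight (not_not.1 hw))
    have hroot : root ∉ S := not_not.2 .refl
    have hle : p u + S.indicator (fun _ => ε) u ≤ p u := hmax ⟨hraise, by simp [hroot]⟩ u
    rw [Set.indicator_of_mem hu, add_le_iff_nonpos_right] at hle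
    exact hle.not_gt hε
  · rintro hreach q ⟨hq, hroot⟩ u
    have hgain := hq.sub_le_sub_of_reflTransGen (hreach u)
    rwa [hroot, sub_self, sub_nonpos] at hgain

end LinearOrder

end DifferenceSystem

section Market

variable {Firm Worker : Type*} {A : Firm → Worker → ℝ} {m : Worker → Firm} {y : Worker → ℝ}

/-- The salary vector `y` extended to `W₀ = W ∪ {0}` by `y₀ = 0`, with `none` as the node `0`. -/
def zeroExtend (y : Worker → ℝ) : Option Worker → ℝ
  | none => 0
  | some j => y j

/-- The inequalities defining `C(W)`, as difference constraints on `W ∪ {0}`: `0 ≤ y_k` bounds the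
difference from `0` to `k`, and `y_j ≤ A (m j) j` the difference from `j` to `0`. -/
def salarySystem (A : Firm → Worker → ℝ) (m : Worker → Firm) :
    DifferenceSystem (Option Worker) ℝ where
  arc
    | none, none => False
    | none, some _ => True
    | some _, none => True
    | some j, some k => m j ≠ m k
  bound
    | none, _ => 0
    | some j, none => -A (m j) j
    | some j, some k => A (m j) k - A (m j) j

theorem isFeasible_zeroExtend_iff : (salarySystem A m).IsFeasible (zeroExtend y) ↔ y ∈ CW A m := by
  simp only [DifferenceSystem.IsFeasible, Option.forall, salarySystem, zeroExtend, CW,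
    Set.mem_ofPred_eq, false_imp_iff, true_imp_iff, true_and, sub_zero, zero_sub, neg_le_neg_iff,
    forall_and, and_assoc, and_left_comm]

theorem isTight_zeroExtend : (salarySystem A m).IsTight (zeroExtend y) = tightArc A m y := by
  ext u v
  cases u <;> cases v <;>
    simp only [DifferenceSystem.IsTight, salarySystem, zeroExtend, tightArc, false_and, true_and,
      sub_zero, zero_sub, neg_inj]

theorem zeroExtend_mem_upperBounds_iff :
    zeroExtend y ∈ upperBounds {q | (salarySystem A m).IsFeasible q ∧ q none = 0} ↔
      y ∈ upperBounds (CW A m) := by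
  constructor
  · intro hmax y' hy' j
    exact hmax ⟨isFeasible_zeroExtend_iff.2 hy', rfl⟩ (some j)
  · rintro hmax q ⟨hq, hroot⟩
    obtain ⟨y', rfl⟩ : ∃ y', q = zeroExtend y' := by
      refine ⟨q ∘ some, ?_⟩
      ext (_ | j)
      exacts [hroot, rfl]
    rintro (_ | j)
    exacts [le_rfl, hmax (isFeasible_zeroExtend_iff.1 hq) j]

theorem max_salary_iff_zero_sinked_general [Finite Worker] (hy : y ∈ CW A m) :
    (∀ y' ∈ CW A m, ∀ j, y' j ≤ y j) ↔
      ∀ u, Relation.ReflTransGen (tightArc A m y) u none := by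
  rw [← isTight_zeroExtend, ← (isFeasible_zeroExtend_iff.2 hy).mem_upperBounds_iff]
  exact zeroExtend_mem_upperBounds_iff.symm

end Market

/-- `y` is the coordinatewise maximum element of `C(W)` iff its tight
digraph contains a `0`-sinked directed spanning tree, i.e. node `0` is reachable from
every node by a directed path of tight arcs. -/
theorem max_salary_iff_zero_sinked (A : F → W → ℝ) (r : F → ℕ)
    (hA : ∀ i j, 0 ≤ A i j) (hbal : ∑ i, r i = Fintype.card W)
    (m : W → F) (hm : IsBalancedOptimal A r m)
    (y : W → ℝ) (hy : y ∈ CW A m) :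
    (∀ y' ∈ CW A m, ∀ j : W, y' j ≤ y j) ↔
      ∀ u : Option W, Relation.ReflTransGen (tightArc A m y) u none :=
  max_salary_iff_zero_sinked_general hy

end
end

section
/- Let γ=(F,W,A,r) be a capacity-balanced many-to-one assignment market with nonempty W and optimal matching μ, and let y∈C(W). If y is the coordinatewise minimum element of C(W), then there exists a worker j∈W with y_j = 0; if y is the coordinatewise maximum element of C(W), then there exists a worker j∈W with y_j = a_{j^μ j}. -/
open Finset
open scoped Classical

noncomputable section

variable {F W : Type*} [Fintype F] [Fintype W]

/-!
Adding one and the same constant to all salaries leaves the salary differences unchanged, so within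
`C(W)` only the bounds `0 ≤ y_j ≤ a_{j^μ j}` limit such a shift. At the least (greatest) element the
shift downwards by the smallest salary (upwards by the smallest slack `a_{j^μ j} - y_j`) must
therefore be zero.
-/

section UniformShift

variable {F W : Type*} {A : F → W → ℝ} {m : W → F} {y : W → ℝ}

lemma add_const_mem_CW {c : ℝ} (hy : y ∈ CW A m)
    (hc : ∀ j, 0 ≤ y j + c ∧ y j + c ≤ A (m j) j) : (fun j => y j + c) ∈ CW A m :=
  ⟨hc, fun j k hjk => (hy.2 j k hjk).trans_eq (add_sub_add_right_eq_sub ..).symm⟩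

lemma exists_eq_zero_of_isLeast_CW [Finite W] [Nonempty W] (hy : IsLeast (CW A m) y) :
    ∃ j, y j = 0 := by
  obtain ⟨j, hj⟩ := Finite.exists_min y
  have bounds := hy.1.1
  have shifted_mem : (fun k => y k + -y j) ∈ CW A m :=
    add_const_mem_CW hy.1 fun k =>
      ⟨by linarith [hj k], by linarith [(bounds j).1, (bounds k).2]⟩
  have le_shifted : y j ≤ y j + -y j := hy.2 shifted_mem j
  exact ⟨j, by linarith [(bounds j).1]⟩

lemma exists_eq_of_isGreatest_CW [Finite W] [Nonempty W] (hy : IsGreatest (CW A m) y) :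
    ∃ j, y j = A (m j) j := by
  obtain ⟨j, hj⟩ := Finite.exists_min fun k => A (m k) k - y k
  have bounds := hy.1.1
  have shifted_mem : (fun k => y k + (A (m j) j - y j)) ∈ CW A m :=
    add_const_mem_CW hy.1 fun k =>
      ⟨by linarith [(bounds j).2, (bounds k).1], by linarith [hj k]⟩
  have shifted_le : y j + (A (m j) j - y j) ≤ y j := hy.2 shifted_mem j
  exact ⟨j, by linarith [(bounds j).2]⟩

theorem side_optimal_tight_worker_general [Finite W] [Nonempty W] :
    (IsLeast (CW A m) y → ∃ j, y j = 0) ∧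
      (IsGreatest (CW A m) y → ∃ j, y j = A (m j) j) :=
  ⟨exists_eq_zero_of_isLeast_CW, exists_eq_of_isGreatest_CW⟩

end UniformShift

/-- at the minimum vector of competitive salaries some worker has zero
salary, and at the maximum vector some worker `j` gets the whole surplus `a_{j^μ j}`. -/
theorem side_optimal_tight_worker (A : F → W → ℝ) (r : F → ℕ)
    (hA : ∀ i j, 0 ≤ A i j) (hbal : ∑ i, r i = Fintype.card W)
    (hW : Nonempty W)
    (m : W → F) (hm : IsBalancedOptimal A r m)
    (y : W → ℝ) (hy : y ∈ CW A m) :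
    ((∀ y' ∈ CW A m, ∀ j : W, y j ≤ y' j) → ∃ j : W, y j = 0) ∧
    ((∀ y' ∈ CW A m, ∀ j : W, y' j ≤ y j) → ∃ j : W, y j = A (m j) j) :=
  ⟨fun h => side_optimal_tight_worker_general.1 ⟨hy, h⟩,
    fun h => side_optimal_tight_worker_general.2 ⟨hy, h⟩⟩

end
end

section
/- Let γ=(F,W,A,r) be a capacity-balanced many-to-one assignment market with optimal matching μ, θ an order on W, and θ̃ an extension of θ (a labeling of each position by min or max). If the max-min salary vector y^θ̃ belongs to C(W), then y^θ̃ is an extreme point of C(W). -/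
open Finset
open scoped Classical

noncomputable section

variable {F W : Type*} [Fintype F] [Fintype W]

/-- the set of predecessors of position `s` under the order `θ` on the workers -/
def predsOf {n : ℕ} (θ : Fin n ≃ W) (s : Fin n) : Finset W :=
  (univ.filter fun t : Fin n => t < s).image θ

/-- `y` is the max-min salary vector associated with the extended order given by the
order `θ` on `W` and the labels `ε` (`true` = max, `false` = min): each worker in turn
maximizes or minimizes his/her salary given the salaries of his/her predecessors. -/
def IsMaxMinVector (A : F → W → ℝ) (m : W → F) {n : ℕ} (θ : Fin n ≃ W)
    (ε : Fin n → Bool) (y : W → ℝ) : Prop :=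
  ∀ s : Fin n,
    y (θ s) =
      if ε s then
        (insert (A (m (θ s)) (θ s))
          (((predsOf θ s).filter fun j => m j ≠ m (θ s)).image
            fun j => y j - A (m (θ s)) j + A (m (θ s)) (θ s))).min'
          (insert_nonempty _ _)
      else
        (insert (0 : ℝ)
          (((predsOf θ s).filter fun j => m j ≠ m (θ s)).image
            fun j => y j - A (m j) j + A (m j) (θ s))).max'
          (insert_nonempty _ _)

/-! A worker maximizing or minimizing against the predecessors makes one constraint of `C(W)` tight,
and the other end of that constraint is the base node `0` or a predecessor; hence every worker is
connected to `0` in the tight digraph of `y`. A tight arc cuts out a face of `C(W)`, so the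
endpoints of any segment in `C(W)` around `y` keep all tight arcs of `y`. Each arc fixes a
difference of salaries, and connectedness to `0` then leaves `y` as the only possible endpoint. -/

section

omit [Fintype F] [Fintype W]

theorem isExtreme_sep_eq_of_forall_le {𝕜 E β : Type*} [Semiring 𝕜] [PartialOrder 𝕜]
    [AddCommMonoid E] [Module 𝕜 E] [AddCommMonoid β] [LinearOrder β]
    [IsOrderedCancelAddMonoid β] [Module 𝕜 β] [PosSMulStrictMono 𝕜 β] {s : Set E}
    (f : E →ₗ[𝕜] β) {c : β} (hf : ∀ x ∈ s, c ≤ f x) :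
    IsExtreme 𝕜 s {x ∈ s | f x = c} where
  subset := Set.sep_subset _ _
  left_mem_of_mem_openSegment x hx y hy z hz hzxy := by
    have hle : f x ≤ f z := (f.concaveOn convex_univ).left_le_of_le_right
      (Set.mem_univ x) (Set.mem_univ y) hzxy (hz.2.trans_le (hf y hy))
    exact ⟨hx, (hle.trans_eq hz.2).antisymm (hf x hx)⟩

variable {A : F → W → ℝ} {m : W → F} {x y : W → ℝ}

theorem isExtreme_sep_tightArc (A : F → W → ℝ) (m : W → F) (u v : Option W) :
    IsExtreme ℝ (CW A m) {x ∈ CW A m | tightArc A m x u v} := by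
  have isExtreme_of_functional (f : (W → ℝ) →ₗ[ℝ] ℝ) (c : ℝ) (hf : ∀ x ∈ CW A m, c ≤ f x)
      (htight : ∀ x, f x = c ↔ tightArc A m x u v) :
      IsExtreme ℝ (CW A m) {x ∈ CW A m | tightArc A m x u v} := by
    simpa only [htight] using isExtreme_sep_eq_of_forall_le f hf
  have isExtreme_of_not_tight (h : ∀ x, ¬ tightArc A m x u v) :
      IsExtreme ℝ (CW A m) {x ∈ CW A m | tightArc A m x u v} :=
    ⟨Set.sep_subset _ _, fun _ _ _ _ z hz => absurd hz.2 (h z)⟩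
  match u, v with
  | none, none => exact isExtreme_of_not_tight fun _ => id
  | none, some k =>
    exact isExtreme_of_functional (.proj k) 0 (fun x hx => (hx.1 k).1) fun x => Iff.rfl
  | some j, none =>
    exact isExtreme_of_functional (-.proj j) (-A (m j) j) (fun x hx => neg_le_neg (hx.1 j).2)
      fun x => neg_inj
  | some j, some k =>
    by_cases hjk : m j = m k
    · exact isExtreme_of_not_tight fun _ h => h.1 hjk
    · exact isExtreme_of_functional (.proj k - .proj j) (A (m j) k - A (m j) j)
        (fun x hx => hx.2 j k hjk) fun x => (and_iff_right hjk).symm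

theorem tightArc_left_of_mem_openSegment {x₁ x₂ : W → ℝ} {u v : Option W}
    (hx₁ : x₁ ∈ CW A m) (hx₂ : x₂ ∈ CW A m) (hy : y ∈ CW A m) (hseg : y ∈ openSegment ℝ x₁ x₂)
    (huv : tightArc A m y u v) : tightArc A m x₁ u v :=
  ((isExtreme_sep_tightArc A m u v).left_mem_of_mem_openSegment hx₁ hx₂ ⟨hy, huv⟩ hseg).2

theorem elim_sub_eq_of_tightArc {u v : Option W} (hx : tightArc A m x u v)
    (hy : tightArc A m y u v) : u.elim 0 (x - y) = v.elim 0 (x - y) := by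
  match u, v with
  | none, some k => simp_all [tightArc]
  | some j, none => simp_all [tightArc]
  | some j, some k =>
    change x j - y j = x k - y k
    linarith [hx.2, hy.2]

theorem eq_of_eqvGen_tightArc (harc : ∀ u v, tightArc A m y u v → tightArc A m x u v)
    (hconn : ∀ j, Relation.EqvGen (tightArc A m y) none (some j)) : x = y := by
  have constant_on_components : Relation.EqvGen.setoid (tightArc A m y) ≤
      Setoid.ker fun u => u.elim 0 (x - y) :=
    Setoid.eqvGen_le fun u v huv => elim_sub_eq_of_tightArc (harc u v huv) huv
  funext j
  have hzero : 0 = x j - y j := constant_on_components (hconn j)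
  exact sub_eq_zero.mp hzero.symm

theorem mem_extremePoints_CW_of_eqvGen_tightArc (hy : y ∈ CW A m)
    (hconn : ∀ j, Relation.EqvGen (tightArc A m y) none (some j)) :
    y ∈ Set.extremePoints ℝ (CW A m) :=
  ⟨hy, fun _ hx₁ _ hx₂ hseg => eq_of_eqvGen_tightArc
    (fun _ _ huv => tightArc_left_of_mem_openSegment hx₁ hx₂ hy hseg huv) hconn⟩

namespace IsMaxMinVector

variable {n : ℕ} {θ : Fin n ≃ W} {ε : Fin n → Bool}

theorem exists_tightArc_of_max (h : IsMaxMinVector A m θ ε y) {s : Fin n} (hs : ε s = true) :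
    ∃ u ∈ insertNone (predsOf θ s), tightArc A m y (some (θ s)) u := by
  have hmin := h s
  rw [if_pos hs] at hmin
  have hmem := hmin ▸ min'_mem _ _
  rcases mem_insert.mp hmem with htop | hpred
  · exact ⟨none, none_mem_insertNone, htop⟩
  · obtain ⟨j, hj, heq⟩ := mem_image.mp hpred
    obtain ⟨hjs, hfirm⟩ := mem_filter.mp hj
    exact ⟨some j, some_mem_insertNone.mpr hjs, hfirm.symm, by linarith⟩

theorem exists_tightArc_of_min (h : IsMaxMinVector A m θ ε y) {s : Fin n} (hs : ε s = false) :
    ∃ u ∈ insertNone (predsOf θ s), tightArc A m y u (some (θ s)) := by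
  have hmax := h s
  rw [if_neg (by simp [hs])] at hmax
  have hmem := hmax ▸ max'_mem _ _
  rcases mem_insert.mp hmem with hbot | hpred
  · exact ⟨none, none_mem_insertNone, hbot⟩
  · obtain ⟨j, hj, heq⟩ := mem_image.mp hpred
    obtain ⟨hjs, hfirm⟩ := mem_filter.mp hj
    exact ⟨some j, some_mem_insertNone.mpr hjs, hfirm, by linarith⟩

theorem exists_symmGen_tightArc (h : IsMaxMinVector A m θ ε y) (s : Fin n) :
    ∃ u ∈ insertNone (predsOf θ s), Relation.SymmGen (tightArc A m y) u (some (θ s)) := by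
  cases hs : ε s with
  | true =>
    obtain ⟨u, hu, harc⟩ := h.exists_tightArc_of_max hs
    exact ⟨u, hu, .of_rel_symm harc⟩
  | false =>
    obtain ⟨u, hu, harc⟩ := h.exists_tightArc_of_min hs
    exact ⟨u, hu, .of_rel harc⟩

theorem eqvGen_tightArc (h : IsMaxMinVector A m θ ε y) (j : W) :
    Relation.EqvGen (tightArc A m y) none (some j) := by
  obtain ⟨s, rfl⟩ := θ.surjective j
  induction s using WellFoundedLT.induction with
  | ind s ih =>
    obtain ⟨u, hu, harc⟩ := h.exists_symmGen_tightArc s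
    have hbase : Relation.EqvGen (tightArc A m y) none u := by
      cases u with
      | none => exact .refl _
      | some i =>
        obtain ⟨t, ht, rfl⟩ := mem_image.mp (some_mem_insertNone.mp hu)
        exact ih t (mem_filter.mp ht).2
    exact hbase.trans _ _ _ (harc.elim (.rel _ _) fun hrev => .symm _ _ (.rel _ _ hrev))

end IsMaxMinVector

end

/-- a max-min salary vector that belongs to `C(W)` is an extreme point
of `C(W)`. -/
theorem maxmin_in_CW_is_extreme (A : F → W → ℝ) (r : F → ℕ)
    (hA : ∀ i j, 0 ≤ A i j) (hbal : ∑ i, r i = Fintype.card W)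
    (m : W → F) (hm : IsBalancedOptimal A r m)
    {n : ℕ} (θ : Fin n ≃ W) (ε : Fin n → Bool) (y : W → ℝ)
    (hmaxmin : IsMaxMinVector A m θ ε y) (hy : y ∈ CW A m) :
    y ∈ Set.extremePoints ℝ (CW A m) :=
  mem_extremePoints_CW_of_eqvGen_tightArc hy hmaxmin.eqvGen_tightArc

end
end

section
/- Let γ=(F,W,A,r) be a capacity-balanced many-to-one assignment market with optimal matching μ. Then every extreme point of C(W) equals the max-min salary vector y^θ̃ for some extended order θ̃ on W; that is, Ext(C(W)) ⊆ { y^θ̃ : θ̃ an extended order on W }. -/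
open Finset
open scoped Classical

noncomputable section

variable {F W : Type*} [Fintype F] [Fintype W]

/-!
Order the workers greedily so that each one is joined, in the digraph of tight core constraints on
`W ∪ {0}`, to `0` or to a predecessor. This never gets stuck: if no tight arc joined `S ∪ {0}` to
the remaining workers, raising or lowering all their salaries by the same small amount would keep
`y` in `C(W)`, so `y` would not be extreme. A tight arc entering worker `k` says that `y k` attains
one of the lower bounds imposed by the predecessors (label min), a tight arc leaving `k` that it
attains one of the upper bounds (label max).
-/

section ExtremePoints

open scoped Topology

variable {𝕜 E : Type*} [Field 𝕜] [LinearOrder 𝕜] [IsStrictOrderedRing 𝕜] [TopologicalSpace 𝕜]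
  [OrderTopology 𝕜] [AddCommGroup E] [Module 𝕜 E]

theorem eventually_add_mul_le_add_mul {a b c d : 𝕜} (hab : a ≤ b) (hcd : a = b → c = d) :
    ∀ᶠ t in 𝓝 (0 : 𝕜), a + t * c ≤ b + t * d := by
  rcases hab.eq_or_lt with rfl | hlt
  · simp only [hcd rfl, le_refl, Filter.eventually_true]
  · have tendsto_line (p q : 𝕜) : Filter.Tendsto (fun t ↦ p + t * q) (𝓝 0) (𝓝 p) :=
      Continuous.tendsto' (by fun_prop) 0 p (by ring)
    exact ((tendsto_line a c).eventually_lt (tendsto_line b d) hlt).mono fun _ ↦ le_of_lt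

theorem eq_zero_of_mem_extremePoints_of_eventually {C : Set E} {x v : E}
    (hx : x ∈ C.extremePoints 𝕜) (hv : ∀ᶠ t in 𝓝 (0 : 𝕜), x + t • v ∈ C) : v = 0 := by
  have hneg : ∀ᶠ t in 𝓝 (0 : 𝕜), x - t • v ∈ C := by
    have : Filter.Tendsto (Neg.neg : 𝕜 → 𝕜) (𝓝 0) (𝓝 0) := by
      simpa only [neg_zero] using continuous_neg.tendsto (0 : 𝕜)
    simpa only [neg_smul, ← sub_eq_add_neg] using this.eventually hv
  obtain ⟨t, ⟨hsub, hadd⟩, ht⟩ :=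
    (((hneg.and hv).filter_mono nhdsWithin_le_nhds).and
      (self_mem_nhdsWithin (s := Set.Ioi (0 : 𝕜)))).exists
  have : Invertible (2 : 𝕜) := invertibleOfNonzero two_ne_zero
  have hends : x - t • v = x := hx.2 hsub hadd (mem_openSegment_sub_add x (t • v))
  exact (smul_eq_zero.1 (sub_eq_self.1 hends)).resolve_left ht.ne'

end ExtremePoints

section GreedyOrder

variable {α : Type*} [Fintype α] {P : Finset α → α → Prop}

theorem exists_injective_forall_image_Iio (hP : ∀ S ≠ univ, ∃ k ∉ S, P S k) (n : ℕ)
    (hn : n ≤ Fintype.card α) :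
    ∃ f : Fin n → α, f.Injective ∧ ∀ s, P ((Iio s).image f) (f s) := by
  induction n with
  | zero => exact ⟨Fin.elim0, fun s ↦ s.elim0, fun s ↦ s.elim0⟩
  | succ n ih =>
    obtain ⟨f, hf, hfP⟩ := ih (Nat.le_of_succ_le hn)
    have hne : univ.image f ≠ univ := fun h ↦ by
      have hcard := card_image_of_injective univ hf
      rw [h, card_univ, card_fin] at hcard
      omega
    obtain ⟨k, hk, hPk⟩ := hP _ hne
    have image_snoc (T : Finset (Fin n)) :
        (T.map Fin.castSuccEmb).image (Fin.snoc f k : Fin (n + 1) → α) = T.image f := by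
      ext; simp
    refine ⟨Fin.snoc f k, Fin.snoc_injective_iff.2 ⟨hf, by simpa using hk⟩, fun s ↦ ?_⟩
    cases s using Fin.lastCases with
    | last => rwa [Fin.Iio_last_eq_map, image_snoc, Fin.snoc_last]
    | cast s => simpa only [Fin.Iio_castSucc, image_snoc, Fin.snoc_castSucc] using hfP s

theorem exists_equiv_forall_predsOf (hP : ∀ S ≠ univ, ∃ k ∉ S, P S k) :
    ∃ θ : Fin (Fintype.card α) ≃ α, ∀ s, P (predsOf θ s) (θ s) := by
  obtain ⟨f, hf, hfP⟩ := exists_injective_forall_image_Iio hP _ le_rfl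
  have hbij : f.Bijective := (Fintype.bijective_iff_injective_and_card f).2 ⟨hf, Fintype.card_fin _⟩
  refine ⟨.ofBijective f hbij, fun s ↦ ?_⟩
  have hpreds : predsOf (.ofBijective f hbij) s = (Iio s).image f := by
    rw [predsOf, filter_gt_eq_Iio, Equiv.coe_ofBijective]
  simpa only [hpreds, Equiv.ofBijective_apply] using hfP s

end GreedyOrder

section TightDigraph

open scoped Topology

omit [Fintype F] [Fintype W]

variable {A : F → W → ℝ} {m : W → F} {y : W → ℝ}

theorem eventually_add_smul_mem_CW [Finite W] {d : W → ℝ} (hy : y ∈ CW A m)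
    (hd : ∀ u v, tightArc A m y u v → u.elim 0 d = v.elim 0 d) :
    ∀ᶠ t in 𝓝 (0 : ℝ), y + t • d ∈ CW A m := by
  have hlower : ∀ᶠ t in 𝓝 (0 : ℝ), ∀ j, 0 + t * 0 ≤ y j + t * d j :=
    Filter.eventually_all.2 fun j ↦
      eventually_add_mul_le_add_mul (hy.1 j).1 fun h ↦ hd none (some j) h.symm
  have hupper : ∀ᶠ t in 𝓝 (0 : ℝ), ∀ j, y j + t * d j ≤ A (m j) j + t * 0 :=
    Filter.eventually_all.2 fun j ↦
      eventually_add_mul_le_add_mul (hy.1 j).2 (hd (some j) none)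
  have hdiff : ∀ᶠ t in 𝓝 (0 : ℝ), ∀ j k, m j ≠ m k →
      A (m j) k - A (m j) j + t * d j ≤ y k - y j + t * d k := by
    simp only [Filter.eventually_all]
    exact fun j k hjk ↦
      eventually_add_mul_le_add_mul (hy.2 j k hjk) fun h ↦ hd (some j) (some k) ⟨hjk, h.symm⟩
  filter_upwards [hlower, hupper, hdiff] with t hlower hupper hdiff
  simp only [CW, Set.mem_ofPred_eq, Pi.add_apply, Pi.smul_apply, smul_eq_mul]
  exact ⟨fun j ↦ ⟨by linarith [hlower j], by linarith [hupper j]⟩,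
    fun j k hjk ↦ by linarith [hdiff j k hjk]⟩

theorem exists_tightArc_of_mem_extremePoints [Fintype W] (hy : y ∈ (CW A m).extremePoints ℝ)
    (S : Finset W) (hS : S ≠ univ) :
    ∃ k ∉ S, ∃ u ∈ insertNone S, tightArc A m y u (some k) ∨ tightArc A m y (some k) u := by
  by_contra! hnone
  set d : W → ℝ := fun k ↦ if k ∈ S then 0 else 1 with hd
  have exists_worker (u : Option W) (hu : u ∉ insertNone S) : ∃ k, u = some k ∧ k ∉ S := by
    cases u <;> simp_all
  have d_of_mem (u : Option W) (hu : u ∈ insertNone S) : u.elim 0 d = 0 := by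
    cases u <;> simp_all
  have d_of_notMem (u : Option W) (hu : u ∉ insertNone S) : u.elim 0 d = 1 := by
    obtain ⟨k, rfl, hk⟩ := exists_worker u hu
    exact if_neg hk
  have hconst (u v : Option W) (huv : tightArc A m y u v) : u.elim 0 d = v.elim 0 d := by
    by_cases hu : u ∈ insertNone S <;> by_cases hv : v ∈ insertNone S
    · rw [d_of_mem u hu, d_of_mem v hv]
    · obtain ⟨k, rfl, hk⟩ := exists_worker v hv
      exact absurd huv (hnone k hk u hu).1
    · obtain ⟨k, rfl, hk⟩ := exists_worker u hu
      exact absurd huv (hnone k hk v hv).2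
    · rw [d_of_notMem u hu, d_of_notMem v hv]
  have hd0 : d = 0 :=
    eq_zero_of_mem_extremePoints_of_eventually hy (eventually_add_smul_mem_CW hy.1 hconst)
  obtain ⟨k, hk⟩ : ∃ k, k ∉ S := by simpa [eq_univ_iff_forall] using hS
  simpa [hd, hk] using congrFun hd0 k

variable (A m y) in
/-- The lower bounds on the salary of `k` over which a worker labelled min maximizes: `0` and those
imposed by the salaries `y` of the workers in `S` at other firms. -/
def salaryLowerBounds (S : Finset W) (k : W) : Finset ℝ :=
  insert 0 ((S.filter fun j ↦ m j ≠ m k).image fun j ↦ y j - A (m j) j + A (m j) k)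

variable (A m y) in
/-- The upper bounds on the salary of `k` over which a worker labelled max minimizes: the value of
`k` to its own firm and those imposed by the salaries `y` of the workers in `S` at other firms. -/
def salaryUpperBounds (S : Finset W) (k : W) : Finset ℝ :=
  insert (A (m k) k) ((S.filter fun j ↦ m j ≠ m k).image fun j ↦ y j - A (m k) j + A (m k) k)

variable {S : Finset W} {k : W} {u : Option W}

theorem isGreatest_salaryLowerBounds (hy : y ∈ CW A m) (hu : u ∈ insertNone S)
    (huk : tightArc A m y u (some k)) : IsGreatest (salaryLowerBounds A m y S k) (y k) := by
  constructor
  · cases u with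
    | none => simp [salaryLowerBounds, show y k = 0 from huk]
    | some j =>
      refine mem_insert_of_mem (mem_image.2 ⟨j, ?_, by linarith [huk.2]⟩)
      exact mem_filter.2 ⟨some_mem_insertNone.1 hu, huk.1⟩
  · simp only [salaryLowerBounds, upperBounds, coe_insert, coe_image, coe_filter]
    rintro _ (rfl | ⟨j, ⟨-, hjk⟩, rfl⟩)
    · exact (hy.1 k).1
    · linarith [hy.2 j k hjk]

theorem isLeast_salaryUpperBounds (hy : y ∈ CW A m) (hu : u ∈ insertNone S)
    (hku : tightArc A m y (some k) u) : IsLeast (salaryUpperBounds A m y S k) (y k) := by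
  constructor
  · cases u with
    | none => simp [salaryUpperBounds, show y k = A (m k) k from hku]
    | some j =>
      refine mem_insert_of_mem (mem_image.2 ⟨j, ?_, by linarith [hku.2]⟩)
      exact mem_filter.2 ⟨some_mem_insertNone.1 hu, hku.1.symm⟩
  · simp only [salaryUpperBounds, lowerBounds, coe_insert, coe_image, coe_filter]
    rintro _ (rfl | ⟨j, ⟨-, hjk⟩, rfl⟩)
    · exact (hy.1 k).2
    · linarith [hy.2 k j hjk.symm]

theorem exists_label_of_tightArc (hy : y ∈ CW A m)
    (h : ∃ u ∈ insertNone S, tightArc A m y u (some k) ∨ tightArc A m y (some k) u) :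
    ∃ b : Bool, y k =
      if b then (salaryUpperBounds A m y S k).min' (insert_nonempty _ _)
      else (salaryLowerBounds A m y S k).max' (insert_nonempty _ _) := by
  obtain ⟨u, hu, huk | hku⟩ := h
  · exact ⟨false, (isGreatest_salaryLowerBounds hy hu huk).unique (isGreatest_max' _ _)⟩
  · exact ⟨true, (isLeast_salaryUpperBounds hy hu hku).unique (isLeast_min' _ _)⟩

theorem extreme_is_maxmin_general [Fintype W] (hy : y ∈ (CW A m).extremePoints ℝ) :
    ∃ (θ : Fin (Fintype.card W) ≃ W) (ε : Fin (Fintype.card W) → Bool),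
      IsMaxMinVector A m θ ε y := by
  obtain ⟨θ, hθ⟩ := exists_equiv_forall_predsOf (exists_tightArc_of_mem_extremePoints hy)
  choose ε hε using fun s ↦ exists_label_of_tightArc hy.1 (hθ s)
  exact ⟨θ, ε, hε⟩

end TightDigraph

/-- every extreme point of `C(W)` is the max-min salary vector of some
extended order on the set of workers. -/
theorem extreme_is_maxmin (A : F → W → ℝ) (r : F → ℕ)
    (hA : ∀ i j, 0 ≤ A i j) (hbal : ∑ i, r i = Fintype.card W)
    (m : W → F) (hm : IsBalancedOptimal A r m)
    (y : W → ℝ) (hy : y ∈ Set.extremePoints ℝ (CW A m)) :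
    ∃ (θ : Fin (Fintype.card W) ≃ W) (ε : Fin (Fintype.card W) → Bool),
      IsMaxMinVector A m θ ε y :=
  extreme_is_maxmin_general hy

end
end
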